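/- A metric tree M is compact if and only if both of the following hold: (1) M = ⋃_{f ∈ F} [a, f] for every a ∈ M, and (2) the closure of F is compact, where F is the set of final points (leaves) of M. -/

import Mathlib

/-- `S` is a metric segment from `x` to `y` in a metric space: `S` contains `x` and `y`, and
the map `z ↦ dist x z` is an isometry from `S` onto the real interval `[0, dist x y]`. -/
def IsMetricSegment {X : Type*} [MetricSpace X] (S : Set X) (x y : X) : Prop :=
  x ∈ S ∧ y ∈ S ∧
    (∀ z ∈ S, ∀ w ∈ S, |dist x z - dist x w| = dist z w) ∧
    (fun z => dist x z) '' S = Set.Icc 0 (dist x y)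

/-- A metric tree structure on a metric space `M`: every pair of points is joined by a unique
metric segment `seg x y`, and if `[x,z] ∩ [z,y] = {z}` then `[x,z] ∪ [z,y] = [x,y]`. -/
structure MetricTree (M : Type*) [MetricSpace M] where
  seg : M → M → Set M
  seg_isSegment : ∀ x y : M, IsMetricSegment (seg x y) x y
  seg_unique : ∀ x y : M, ∀ S : Set M, IsMetricSegment S x y → S = seg x y
  seg_glue : ∀ x y z : M, seg x z ∩ seg z y = {z} → seg x z ∪ seg z y = seg x y

/-- The set (Kuratowski) measure of noncompactness of `A`: the infimum of all `b > 0` such that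
`A` admits a finite cover by subsets of `A` of diameter at most `b`. -/
noncomputable def setMNC {X : Type*} [MetricSpace X] (A : Set X) : ℝ :=
  sInf {b : ℝ | 0 < b ∧ ∃ (n : ℕ) (E : Fin n → Set X),
    (∀ j, E j ⊆ A) ∧ (∀ j, Metric.diam (E j) ≤ b) ∧ A ⊆ ⋃ j, E j}

/-- The ball (Hausdorff) measure of noncompactness of `A`: the infimum of all `b > 0` such that
`A` admits a finite cover by open balls of radius `b` centered in the ambient space. -/
noncomputable def ballMNC {X : Type*} [MetricSpace X] (A : Set X) : ℝ :=
  sInf {b : ℝ | 0 < b ∧ ∃ (n : ℕ) (c : Fin n → X), A ⊆ ⋃ j, Metric.ball (c j) b}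

/-- The diameter-based ball measure of noncompactness of `A`: the infimum of all `b > 0` such
that `A` admits a finite cover by open balls each of diameter at most `b`. -/
noncomputable def ballDiamMNC {X : Type*} [MetricSpace X] (A : Set X) : ℝ :=
  sInf {b : ℝ | 0 < b ∧ ∃ (n : ℕ) (c : Fin n → X) (r : Fin n → ℝ),
    (∀ j, Metric.diam (Metric.ball (c j) (r j)) ≤ b) ∧ A ⊆ ⋃ j, Metric.ball (c j) (r j)}

/-- `b > 0` is Lifschitz for `X` iff there is `a > 1` such that whenever `dist x y > r > 0`,
some closed ball of radius `r` contains `closedBall x (a*r) ∩ closedBall y (b*r)`. -/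
def IsLifschitz (X : Type*) [MetricSpace X] (b : ℝ) : Prop :=
  0 < b ∧ ∃ a : ℝ, 1 < a ∧ ∀ x y : X, ∀ r : ℝ, 0 < r → r < dist x y →
    ∃ z : X, Metric.closedBall x (a * r) ∩ Metric.closedBall y (b * r) ⊆ Metric.closedBall z r

/-- The Lifschitz characteristic of `X`: the supremum of all `b` Lifschitz for `X`. -/
noncomputable def lifschitzChar (X : Type*) [MetricSpace X] : ℝ :=
  sSup {b : ℝ | IsLifschitz X b}

/-!
A point `y` lies on `[u, v]` exactly when `[y, u]` and `[y, v]` meet only in `y`. As the points of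
a segment issuing from `y` are linearly ordered by their distance to `y`, a point of one side of a
triangle therefore lies on one of the two other sides.

If `M` is compact, a point beyond `x` at maximal distance from `a` is a leaf `f` with
`x ∈ [a, f]`. Conversely, let `K` be compact and let `z` run through an ultrafilter, with
`z ∈ [a, g z]` and `g z ∈ K`. If `g z` tends to `f`, the triangle `a`, `f`, `g z` puts `z` either
on the compact segment `[a, f]` or on `[f, g z]`, in which case `z` is squeezed to `f`. Hence the
union of the segments from `a` to the points of `K` is compact; take `K` to be the closure of the
set of leaves.
-/

open Filter Set Topology

namespace IsMetricSegment

variable {X : Type*} [MetricSpace X] {S : Set X} {x y z w : X}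

theorem dist_mem_Icc (hS : IsMetricSegment S x y) (hz : z ∈ S) :
    dist x z ∈ Icc 0 (dist x y) :=
  hS.2.2.2 ▸ mem_image_of_mem _ hz

theorem abs_dist_sub_dist (hS : IsMetricSegment S x y) (hz : z ∈ S) (hw : w ∈ S) :
    |dist x z - dist x w| = dist z w :=
  hS.2.2.1 z hz w hw

theorem dist_add_dist_of_le (hS : IsMetricSegment S x y) (hz : z ∈ S) (hw : w ∈ S)
    (hzw : dist x z ≤ dist x w) : dist x z + dist z w = dist x w := by
  have hdist := hS.abs_dist_sub_dist hz hw
  rw [abs_of_nonpos (by linarith)] at hdist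
  linarith

theorem dist_add_dist (hS : IsMetricSegment S x y) (hz : z ∈ S) :
    dist x z + dist z y = dist x y :=
  hS.dist_add_dist_of_le hz hS.2.1 (hS.dist_mem_Icc hz).2

theorem isCompact (hS : IsMetricSegment S x y) : IsCompact S := by
  have hiso : Isometry fun z : S => dist x z :=
    Isometry.of_dist_eq fun z w => hS.abs_dist_sub_dist z.2 w.2
  rw [isCompact_iff_isCompact_univ, hiso.isEmbedding.isCompact_iff, image_univ,
    ← image_eq_range, hS.2.2.2]
  exact isCompact_Icc

end IsMetricSegment

namespace MetricTree

variable {M : Type*} [MetricSpace M] (T : MetricTree M) {a u v w x y z : M}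

theorem left_mem_seg (x y : M) : x ∈ T.seg x y :=
  (T.seg_isSegment x y).1

theorem right_mem_seg (x y : M) : y ∈ T.seg x y :=
  (T.seg_isSegment x y).2.1

theorem mem_seg_of_inter_eq_singleton (h : T.seg x z ∩ T.seg z y = {z}) : z ∈ T.seg x y :=
  T.seg_glue x y z h ▸ Or.inl (T.right_mem_seg x z)

theorem seg_inter_seg_eq_singleton (h : dist x z + dist z y = dist x y) :
    T.seg x z ∩ T.seg z y = {z} := by
  refine Subset.antisymm ?_ (singleton_subset_iff.2 ⟨T.right_mem_seg x z, T.left_mem_seg z y⟩)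
  rintro t ⟨hxz, hzy⟩
  have hxtz := (T.seg_isSegment x z).dist_add_dist hxz
  have hzty := (T.seg_isSegment z y).dist_add_dist hzy
  have hxty := dist_triangle x t y
  rw [dist_comm z t] at hzty
  exact dist_le_zero.1 (by linarith)

theorem mem_seg_iff_dist_add_dist : z ∈ T.seg x y ↔ dist x z + dist z y = dist x y :=
  ⟨(T.seg_isSegment x y).dist_add_dist,
    fun h => T.mem_seg_of_inter_eq_singleton (T.seg_inter_seg_eq_singleton h)⟩

theorem seg_comm (x y : M) : T.seg x y = T.seg y x := by
  ext z
  rw [T.mem_seg_iff_dist_add_dist, T.mem_seg_iff_dist_add_dist, add_comm, dist_comm x z,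
    dist_comm z y, dist_comm x y]

theorem seg_subset_seg (hw : w ∈ T.seg y v) : T.seg y w ⊆ T.seg y v := by
  intro z hz
  rw [T.mem_seg_iff_dist_add_dist] at hw hz ⊢
  have hyzv := dist_triangle y z v
  have hzwv := dist_triangle z w v
  linarith

theorem mem_seg_of_dist_le (hz : z ∈ T.seg y a) (hw : w ∈ T.seg y a)
    (hzw : dist y z ≤ dist y w) : z ∈ T.seg y w :=
  T.mem_seg_iff_dist_add_dist.2 ((T.seg_isSegment y a).dist_add_dist_of_le hz hw hzw)

theorem mem_seg_iff_inter_eq_singleton : y ∈ T.seg u v ↔ T.seg y u ∩ T.seg y v = {y} := by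
  rw [T.seg_comm y u]
  exact ⟨fun hy => T.seg_inter_seg_eq_singleton (T.mem_seg_iff_dist_add_dist.1 hy),
    T.mem_seg_of_inter_eq_singleton⟩

theorem notMem_seg_iff_exists_ne :
    y ∉ T.seg u v ↔ ∃ z ∈ T.seg y u ∩ T.seg y v, z ≠ y := by
  have hy : y ∈ T.seg y u ∩ T.seg y v := ⟨T.left_mem_seg y u, T.left_mem_seg y v⟩
  rw [T.mem_seg_iff_inter_eq_singleton, eq_singleton_iff_unique_mem, and_iff_right hy]
  push Not
  rfl

theorem seg_subset_union (a u v : M) : T.seg u v ⊆ T.seg a u ∪ T.seg a v := by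
  intro y
  contrapose
  rw [mem_union, not_or]
  rintro ⟨hyu, hyv⟩
  obtain ⟨z, ⟨hza, hzu⟩, hz⟩ := T.notMem_seg_iff_exists_ne.1 hyu
  obtain ⟨w, ⟨hwa, hwv⟩, hw⟩ := T.notMem_seg_iff_exists_ne.1 hyv
  rw [T.notMem_seg_iff_exists_ne]
  obtain hzw | hwz := le_total (dist y z) (dist y w)
  · exact ⟨z, ⟨hzu, T.seg_subset_seg hwv (T.mem_seg_of_dist_le hza hwa hzw)⟩, hz⟩
  · exact ⟨w, ⟨T.seg_subset_seg hzu (T.mem_seg_of_dist_le hwa hza hwz), hwv⟩, hw⟩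

/-- The final points of a metric tree: those interior to no segment. -/
def leaves : Set M :=
  {f | ∀ x y : M, f ∉ T.seg x y \ {x, y}}

theorem mem_leaves_of_forall_eq (a : M) (hy : ∀ u, y ∈ T.seg a u → y = u) : y ∈ T.leaves :=
  fun u v ⟨hyuv, hne⟩ => hne ((T.seg_subset_union a u v hyuv).imp (hy u) (hy v))

theorem exists_mem_leaves_mem_seg [CompactSpace M] (a x : M) :
    ∃ f ∈ T.leaves, x ∈ T.seg a f := by
  simp only [T.mem_seg_iff_dist_add_dist]
  have hclosed : IsClosed {y : M | dist a x + dist x y = dist a y} :=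
    isClosed_eq (by fun_prop) (by fun_prop)
  obtain ⟨y, hy, hmax⟩ := hclosed.isCompact.exists_isMaxOn ⟨x, by simp⟩
    (f := fun y => dist a y) (by fun_prop)
  rw [mem_ofPred_eq] at hy
  refine ⟨y, T.mem_leaves_of_forall_eq a fun u hu => ?_, hy⟩
  rw [T.mem_seg_iff_dist_add_dist] at hu
  have hbeyond : dist a x + dist x u = dist a u :=
    le_antisymm (by linarith [dist_triangle x y u]) (dist_triangle a x u)
  have hle : dist a u ≤ dist a y := hmax hbeyond
  exact dist_le_zero.1 (by linarith)

theorem mem_seg_or_dist_le {f g : M} (hz : z ∈ T.seg a g) :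
    z ∈ T.seg a f ∨ dist z f ≤ dist g f := by
  refine (T.seg_subset_union f a g hz).imp (fun h => T.seg_comm f a ▸ h) fun h => ?_
  rw [dist_comm z f, dist_comm g f]
  exact ((T.seg_isSegment f g).dist_mem_Icc h).2

theorem isCompact_biUnion_seg (a : M) {K : Set M} (hK : IsCompact K) :
    IsCompact (⋃ f ∈ K, T.seg a f) := by
  rw [isCompact_iff_ultrafilter_le_nhds']
  intro U hU
  have hend : ∀ᶠ z in (U : Filter M), ∃ g ∈ K, z ∈ T.seg a g := by
    simpa only [mem_iUnion₂, exists_prop] using eventually_mem_set.2 hU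
  obtain ⟨g, hg⟩ := hend.choice
  obtain ⟨f, hfK, hgf⟩ :=
    isCompact_iff_ultrafilter_le_nhds'.1 hK (U.map g) (hg.mono fun _ h => h.1)
  have hcases : ∀ᶠ z in (U : Filter M), z ∈ T.seg a f ∨ dist z f ≤ dist (g z) f :=
    hg.mono fun _ h => T.mem_seg_or_dist_le h.2
  have hsub : T.seg a f ⊆ ⋃ f ∈ K, T.seg a f := subset_biUnion_of_mem (u := T.seg a) hfK
  obtain hseg | hdist := Ultrafilter.eventually_or.1 hcases
  · obtain ⟨x, hx, hUx⟩ :=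
      isCompact_iff_ultrafilter_le_nhds'.1 (T.seg_isSegment a f).isCompact U hseg
    exact ⟨x, hsub hx, hUx⟩
  · have hgf_dist : Tendsto (fun z => dist (g z) f) U (𝓝 0) := tendsto_iff_dist_tendsto_zero.1 hgf
    have hUf : Tendsto id (U : Filter M) (𝓝 f) := tendsto_iff_dist_tendsto_zero.2
      (squeeze_zero' (Eventually.of_forall fun _ => dist_nonneg) hdist hgf_dist)
    exact ⟨f, hsub (T.right_mem_seg a f), hUf⟩

end MetricTree

theorem stmt_17 {M : Type*} [MetricSpace M] (T : MetricTree M) :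
    IsCompact (Set.univ : Set M) ↔
      ((∀ a : M, (Set.univ : Set M) =
          ⋃ f ∈ {f : M | ∀ x y : M, f ∉ T.seg x y \ {x, y}}, T.seg a f) ∧
        IsCompact (closure {f : M | ∀ x y : M, f ∉ T.seg x y \ {x, y}})) := by
  change _ ↔ (∀ a, univ = ⋃ f ∈ T.leaves, T.seg a f) ∧ IsCompact (closure T.leaves)
  constructor
  · intro hM
    have : CompactSpace M := isCompact_univ_iff.1 hM
    refine ⟨fun a => (eq_univ_of_forall fun x => ?_).symm, isClosed_closure.isCompact⟩
    simpa only [mem_iUnion₂, exists_prop] using T.exists_mem_leaves_mem_seg a x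
  · rintro ⟨hcover, hleaves⟩
    obtain _ | ⟨⟨a⟩⟩ := isEmpty_or_nonempty M
    · exact finite_univ.isCompact
    have hunion : ⋃ f ∈ closure T.leaves, T.seg a f = univ :=
      univ_subset_iff.1 (hcover a ▸ biUnion_subset_biUnion_left subset_closure)
    exact hunion ▸ T.isCompact_biUnion_seg a hleaves
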